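/- Assume the concentrability Assumption holds with constants C_S and C_A, and set C := C_S · C_A. Let φ be any aggregation, let ε_φ := min_{g ∈ G_φ} ‖g − Q⋆‖_∞, and let f₀ : S × A → [0, V_max]. Then for every probability distribution ν on S × A satisfying ν(s,a) ≤ C μ(s,a) for all (s,a), ‖Q⋆ − f₀‖_{2,ν} ≤ (2 ε_φ + √C · ‖f₀ − T_φ^μ f₀‖_{2,μ}) / (1 − γ). -/

import Mathlib

/-- `V_f(s) := max_a f(s,a)`. -/
noncomputable def Vof {S A : Type*} [Fintype A] [Nonempty A]
    (f : S × A → ℝ) (s : S) : ℝ :=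
  Finset.univ.sup' Finset.univ_nonempty (fun a => f (s, a))

/-- The Bellman optimality operator `(T f)(s,a) = R(s,a) + γ ∑ s', P(s'|s,a) V_f(s')`. -/
noncomputable def bellmanT {S A : Type*} [Fintype S] [Fintype A] [Nonempty A]
    (P : S → A → S → ℝ) (R : S → A → ℝ) (γ : ℝ) (f : S × A → ℝ) : S × A → ℝ :=
  fun q => R q.1 q.2 + γ * ∑ s', P q.1 q.2 s' * Vof f s'

/-- The projected Bellman operator `T_φ^μ`, which averages `T f` over each
aggregation cell with weights proportional to `μ`. -/
noncomputable def projT {S A X : Type*} [Fintype S] [Fintype A] [Nonempty A]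
    [DecidableEq X]
    (P : S → A → S → ℝ) (R : S → A → ℝ) (γ : ℝ)
    (μ : S × A → ℝ) (φ : S × A → X) (f : S × A → ℝ) : S × A → ℝ :=
  fun q => (∑ q', if φ q' = φ q then μ q' * bellmanT P R γ f q' else 0)
         / (∑ q', if φ q' = φ q then μ q' else 0)

/-- `‖f‖_∞ = max_{s,a} |f(s,a)|`. -/
noncomputable def supNorm {S A : Type*} [Fintype S] [Fintype A] [Nonempty S] [Nonempty A]
    (f : S × A → ℝ) : ℝ :=
  Finset.univ.sup' Finset.univ_nonempty (fun q => |f q|)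

/-- A function is piecewise constant with respect to an aggregation `φ` if it is
constant on each aggregation cell; `G_φ` is the class of such functions. -/
def PiecewiseConst {S A X : Type*} (φ : S × A → X) (g : S × A → ℝ) : Prop :=
  ∀ q q' : S × A, φ q = φ q' → g q = g q'

/-- `‖f‖_{2,ν} := (∑_{s,a} ν(s,a) f(s,a)²)^{1/2}`. -/
noncomputable def l2Norm {S A : Type*} [Fintype S] [Fintype A]
    (ν f : S × A → ℝ) : ℝ :=
  Real.sqrt (∑ q : S × A, ν q * (f q) ^ 2)

/-!
Averaging over the cells of `φ` and one step of the MDP are both stochastic kernels, so by Jensen's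
inequality `T_φ^μ f - T_φ^μ g` has `L²(ν)`-norm at most `γ` times the `L²(ν')`-norm of `f - g`,
where `ν'` pushes `ν` through both kernels and then plays, in each state, an action at which `f`
and `g` differ at least as much as `V_f` and `V_g` do. Concentrability gives `ν' ≤ C μ` whatever
`ν` is. Hence `T_φ^μ` is a `γ`-contraction for the supremum of the `L²(ν)`-norms over all `ν ≤ C μ`,
and the bound follows from the decomposition
`Q⋆ - f₀ = (Q⋆ - T_φ^μ Q⋆) + (T_φ^μ Q⋆ - T_φ^μ f₀) + (T_φ^μ f₀ - f₀)`.
-/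

open Matrix

section Stochastic

variable {α β : Type*} [Fintype α]

theorem vecMul_mem_of_convex {w : α → ℝ} {K : Matrix α β ℝ} {t : Set (β → ℝ)} (ht : Convex ℝ t)
    (hw : w ∈ stdSimplex ℝ α) (hK : ∀ i, K i ∈ t) : w ᵥ* K ∈ t := by
  rw [vecMul_eq_sum]
  exact ht.sum_mem (fun i _ ↦ hw.1 i) hw.2 fun i _ ↦ hK i

theorem dotProduct_sq_le {w : α → ℝ} (hw : w ∈ stdSimplex ℝ α) (f : α → ℝ) :
    (w ⬝ᵥ f) ^ 2 ≤ w ⬝ᵥ f ^ 2 :=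
  Real.pow_arith_mean_le_arith_mean_pow_of_even _ w f (fun i _ ↦ hw.1 i) hw.2 even_two

theorem norm_mulVec_le {K : Matrix β α ℝ} [Fintype β] (hK : ∀ i, K i ∈ stdSimplex ℝ α)
    (f : α → ℝ) : ‖K *ᵥ f‖ ≤ ‖f‖ := by
  refine (pi_norm_le_iff_of_nonneg (norm_nonneg f)).2 fun i ↦ mem_closedBall_zero_iff.1 ?_
  exact (convex_closedBall (0 : ℝ) ‖f‖).sum_mem (fun j _ ↦ (hK i).1 j) (hK i).2
    fun j _ ↦ mem_closedBall_zero_iff.2 (norm_le_pi_norm f j)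

theorem dotProduct_mulVec_sq_le [Fintype β] {w : α → ℝ} {K : Matrix α β ℝ} (hw : 0 ≤ w)
    (hK : ∀ i, K i ∈ stdSimplex ℝ β) (f : β → ℝ) :
    w ⬝ᵥ (K *ᵥ f) ^ 2 ≤ (w ᵥ* K) ⬝ᵥ f ^ 2 := by
  rw [← dotProduct_mulVec]
  exact dotProduct_le_dotProduct_of_nonneg_left (fun i ↦ dotProduct_sq_le (hK i) f) hw

end Stochastic

section DensityBounded

variable {α : Type*} [Fintype α] {C : ℝ} {μ ν : α → ℝ}

/-- The probability vectors whose density with respect to the weights `μ` is at most `C`. -/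
def densityBounded (C : ℝ) (μ : α → ℝ) : Set (α → ℝ) :=
  stdSimplex ℝ α ∩ Set.Iic (C • μ)

theorem pos_of_mem_densityBounded (hμ : 0 ≤ μ) (hν : ν ∈ densityBounded C μ) : 0 < C := by
  by_contra! hC
  have hsum : ∑ i, ν i ≤ 0 :=
    Finset.sum_nonpos fun i _ ↦ (hν.2 i).trans (mul_nonpos_of_nonpos_of_nonneg hC (hμ i))
  linarith [hν.1.2]

end DensityBounded

section CellAverage

variable {α X : Type*} [Fintype α] [DecidableEq X] {μ : α → ℝ}

/-- The kernel replacing a function by its `μ`-weighted averages over the cells of the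
aggregation `φ`. A row is junk (identically `0`) if its cell has zero weight. -/
noncomputable def cellAverage (μ : α → ℝ) (φ : α → X) : Matrix α α ℝ :=
  of fun i j ↦ (if φ j = φ i then μ j else 0) / ∑ k, if φ k = φ i then μ k else 0

theorem cellAverage_mem_stdSimplex (hμ : ∀ i, 0 < μ i) (φ : α → X) (i : α) :
    cellAverage μ φ i ∈ stdSimplex ℝ α := by
  have hcell (j : α) : 0 ≤ if φ j = φ i then μ j else 0 := by
    split_ifs
    exacts [(hμ j).le, le_rfl]
  have hsum : 0 < ∑ j, if φ j = φ i then μ j else 0 :=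
    Finset.sum_pos' (fun j _ ↦ hcell j) ⟨i, Finset.mem_univ i, by simpa using hμ i⟩
  refine ⟨fun j ↦ div_nonneg (hcell j) hsum.le, ?_⟩
  simp only [cellAverage, of_apply]
  rw [← Finset.sum_div, div_self hsum.ne']

theorem cellAverage_mulVec_of_constant {φ : α → X} (hμ : ∀ i, 0 < μ i) {g : α → ℝ}
    (hg : ∀ i j, φ i = φ j → g i = g j) : cellAverage μ φ *ᵥ g = g := by
  ext i
  have hrow (j : α) : cellAverage μ φ i j * g j = cellAverage μ φ i j * g i := by
    by_cases hij : φ j = φ i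
    · rw [hg j i hij]
    · simp [cellAverage, hij]
  calc ∑ j, cellAverage μ φ i j * g j
      = (∑ j, cellAverage μ φ i j) * g i := by simp only [hrow, Finset.sum_mul]
    _ = g i := by rw [(cellAverage_mem_stdSimplex hμ φ i).2, one_mul]

theorem norm_sub_cellAverage_mulVec_le {φ : α → X} (hμ : ∀ i, 0 < μ i) {g : α → ℝ}
    (hg : ∀ i j, φ i = φ j → g i = g j) (f : α → ℝ) :
    ‖f - cellAverage μ φ *ᵥ f‖ ≤ 2 * ‖g - f‖ := by
  have hsplit : f - cellAverage μ φ *ᵥ f = cellAverage μ φ *ᵥ (g - f) - (g - f) := by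
    rw [mulVec_sub, cellAverage_mulVec_of_constant hμ hg]
    abel
  calc ‖f - cellAverage μ φ *ᵥ f‖
      ≤ ‖cellAverage μ φ *ᵥ (g - f)‖ + ‖g - f‖ := hsplit ▸ norm_sub_le _ _
    _ ≤ 2 * ‖g - f‖ := by
      linarith [norm_mulVec_le (cellAverage_mem_stdSimplex hμ φ) (g - f)]

end CellAverage

section L2Norm

variable {S A : Type*} [Fintype S] [Fintype A] {C : ℝ} {μ ν : S × A → ℝ}

theorem supNorm_eq_norm [Nonempty S] [Nonempty A] (f : S × A → ℝ) : supNorm f = ‖f‖ := by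
  refine le_antisymm (Finset.sup'_le _ _ fun q _ ↦ norm_le_pi_norm f q) ?_
  exact (pi_norm_le_iff_of_nonempty f).2 fun q ↦
    Finset.le_sup' (fun q ↦ |f q|) (Finset.mem_univ q)

theorem l2Norm_eq_sqrt_dotProduct (ν f : S × A → ℝ) : l2Norm ν f = √(ν ⬝ᵥ f ^ 2) := rfl

theorem l2Norm_nonneg (ν f : S × A → ℝ) : 0 ≤ l2Norm ν f := Real.sqrt_nonneg _

theorem l2Norm_sub_comm (ν f g : S × A → ℝ) : l2Norm ν (f - g) = l2Norm ν (g - f) := by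
  simp only [l2Norm, Pi.sub_apply, sub_sq_comm]

theorem l2Norm_smul (ν : S × A → ℝ) {c : ℝ} (hc : 0 ≤ c) (f : S × A → ℝ) :
    l2Norm ν (c • f) = c * l2Norm ν f := by
  rw [l2Norm_eq_sqrt_dotProduct, smul_pow, dotProduct_smul, smul_eq_mul,
    Real.sqrt_mul (sq_nonneg c), Real.sqrt_sq hc, l2Norm_eq_sqrt_dotProduct]

theorem l2Norm_eq_norm_toLp (hν : 0 ≤ ν) (f : S × A → ℝ) :
    l2Norm ν f = ‖WithLp.toLp 2 (fun q ↦ √(ν q) * f q)‖ := by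
  simp only [l2Norm, EuclideanSpace.norm_eq, Real.norm_eq_abs, sq_abs, mul_pow,
    Real.sq_sqrt (hν _)]

theorem l2Norm_add_le (hν : 0 ≤ ν) (f g : S × A → ℝ) :
    l2Norm ν (f + g) ≤ l2Norm ν f + l2Norm ν g := by
  simp only [l2Norm_eq_norm_toLp hν, Pi.add_apply, mul_add]
  exact norm_add_le (WithLp.toLp 2 fun q ↦ √(ν q) * f q) (WithLp.toLp 2 fun q ↦ √(ν q) * g q)

theorem l2Norm_le_norm (hν : ν ∈ stdSimplex ℝ (S × A)) (f : S × A → ℝ) : l2Norm ν f ≤ ‖f‖ := by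
  refine Real.sqrt_le_iff.2 ⟨norm_nonneg f, ?_⟩
  calc ∑ q, ν q * f q ^ 2
      ≤ ∑ q, ν q * ‖f‖ ^ 2 := Finset.sum_le_sum fun q _ ↦
        mul_le_mul_of_nonneg_left (sq_le_sq.2 (by simpa using norm_le_pi_norm f q)) (hν.1 q)
    _ = ‖f‖ ^ 2 := by rw [← Finset.sum_mul, hν.2, one_mul]

theorem l2Norm_le_sqrt_mul_l2Norm (hμ : 0 ≤ μ) (hν : ν ≤ C • μ) (f : S × A → ℝ) :
    l2Norm ν f ≤ √C * l2Norm μ f := by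
  have hf : 0 ≤ f ^ 2 := fun q ↦ sq_nonneg (f q)
  rw [l2Norm_eq_sqrt_dotProduct, l2Norm_eq_sqrt_dotProduct,
    ← Real.sqrt_mul' C (dotProduct_nonneg_of_nonneg hμ hf), ← smul_eq_mul, ← smul_dotProduct]
  exact Real.sqrt_le_sqrt (dotProduct_le_dotProduct_of_nonneg_right hν hf)

/-- The worst-case seminorm `sup_ν ‖f‖_{2,ν}` over the distributions `ν ≤ C μ`, for which the
projected Bellman operator contracts. It is `0` if there is no such `ν`. -/
noncomputable def worstL2Norm (C : ℝ) (μ f : S × A → ℝ) : ℝ :=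
  ⨆ ν : densityBounded C μ, l2Norm ν f

theorem worstL2Norm_nonneg (C : ℝ) (μ f : S × A → ℝ) : 0 ≤ worstL2Norm C μ f :=
  Real.iSup_nonneg fun _ ↦ l2Norm_nonneg _ f

theorem l2Norm_le_worstL2Norm (hν : ν ∈ densityBounded C μ) (f : S × A → ℝ) :
    l2Norm ν f ≤ worstL2Norm C μ f := by
  have hbdd : BddAbove (Set.range fun ν : densityBounded C μ ↦ l2Norm ν f) :=
    ⟨‖f‖, Set.forall_mem_range.2 fun ν ↦ l2Norm_le_norm ν.2.1 f⟩
  exact le_ciSup hbdd ⟨ν, hν⟩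

theorem worstL2Norm_le {f : S × A → ℝ} {B : ℝ} (hB : 0 ≤ B)
    (h : ∀ ν ∈ densityBounded C μ, l2Norm ν f ≤ B) : worstL2Norm C μ f ≤ B :=
  Real.iSup_le (fun ν ↦ h ν ν.2) hB

theorem worstL2Norm_add_le (C : ℝ) (μ f g : S × A → ℝ) :
    worstL2Norm C μ (f + g) ≤ worstL2Norm C μ f + worstL2Norm C μ g :=
  worstL2Norm_le (add_nonneg (worstL2Norm_nonneg C μ f) (worstL2Norm_nonneg C μ g)) fun _ hν ↦
    (l2Norm_add_le hν.1.1 f g).trans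
      (add_le_add (l2Norm_le_worstL2Norm hν f) (l2Norm_le_worstL2Norm hν g))

theorem worstL2Norm_le_norm (C : ℝ) (μ f : S × A → ℝ) : worstL2Norm C μ f ≤ ‖f‖ :=
  worstL2Norm_le (norm_nonneg f) fun _ hν ↦ l2Norm_le_norm hν.1 f

theorem worstL2Norm_le_sqrt_mul_l2Norm (C : ℝ) (hμ : 0 ≤ μ) (f : S × A → ℝ) :
    worstL2Norm C μ f ≤ √C * l2Norm μ f :=
  worstL2Norm_le (mul_nonneg (Real.sqrt_nonneg C) (l2Norm_nonneg μ f)) fun _ hν ↦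
    l2Norm_le_sqrt_mul_l2Norm hμ hν.2 f

end L2Norm

section PolicyLift

variable {S A : Type*} [DecidableEq A] {m : S → ℝ}

/-- The joint distribution of a state drawn from `m` and the action that the deterministic
policy `π` takes in it. -/
def policyLift (m : S → ℝ) (π : S → A) : S × A → ℝ :=
  fun q ↦ if q.2 = π q.1 then m q.1 else 0

theorem policyLift_nonneg (hm : 0 ≤ m) (π : S → A) : 0 ≤ policyLift m π := by
  intro q
  unfold policyLift
  split_ifs
  exacts [hm q.1, le_rfl]

theorem policyLift_le {c : S × A → ℝ} (hm : 0 ≤ m) (hc : ∀ q, m q.1 ≤ c q) (π : S → A) :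
    policyLift m π ≤ c := by
  intro q
  unfold policyLift
  split_ifs
  exacts [hc q, (hm q.1).trans (hc q)]

variable [Fintype S] [Fintype A]

theorem policyLift_dotProduct (m : S → ℝ) (π : S → A) (h : S × A → ℝ) :
    policyLift m π ⬝ᵥ h = m ⬝ᵥ fun s ↦ h (s, π s) := by
  simp [dotProduct, policyLift, Fintype.sum_prod_type]

theorem policyLift_mem_stdSimplex (hm : m ∈ stdSimplex ℝ S) (π : S → A) :
    policyLift m π ∈ stdSimplex ℝ (S × A) := by
  refine ⟨policyLift_nonneg hm.1 π, ?_⟩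
  rw [← dotProduct_one, policyLift_dotProduct]
  simpa [dotProduct] using hm.2

end PolicyLift

section Bellman

variable {S A X : Type*} [Fintype A] [Nonempty A] {P : S → A → S → ℝ} {R : S → A → ℝ} {γ C : ℝ}
  {μ ν : S × A → ℝ} {φ : S × A → X}

theorem exists_Vof_sub_le (f g : S × A → ℝ) (s : S) :
    ∃ a, Vof f s - Vof g s ≤ f (s, a) - g (s, a) := by
  obtain ⟨a, -, ha⟩ := Finset.exists_mem_eq_sup' Finset.univ_nonempty fun a ↦ f (s, a)
  have hg : g (s, a) ≤ Vof g s := Finset.le_sup' (fun a ↦ g (s, a)) (Finset.mem_univ a)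
  exact ⟨a, sub_le_sub ha.le hg⟩

theorem exists_abs_Vof_sub_le (f g : S × A → ℝ) (s : S) :
    ∃ a, |Vof f s - Vof g s| ≤ |f (s, a) - g (s, a)| := by
  obtain ⟨a, ha⟩ := exists_Vof_sub_le f g s
  obtain ⟨b, hb⟩ := exists_Vof_sub_le g f s
  rcases abs_choice (Vof f s - Vof g s) with h | h
  · exact ⟨a, h.trans_le (ha.trans (le_abs_self _))⟩
  · rw [neg_sub] at h
    exact ⟨b, h.trans_le (hb.trans (abs_sub_comm (f (s, b)) _ ▸ le_abs_self _))⟩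

theorem transition_le_of_concentrability {μS : S → ℝ} {CS CA : ℝ} (hμ : ∀ q, 0 < μ q)
    (hμS : ∀ s, μS s = ∑ a, μ (s, a)) (hP : ∀ s a s', 0 ≤ P s a s')
    (hCS : ∀ s a s', P s a s' ≤ CS * μS s') (hCA : ∀ s a, 1 / CA ≤ μ (s, a) / μS s)
    (hC : 0 < CS * CA) (s : S) (a : A) (q : S × A) : P s a q.1 ≤ CS * CA * μ q := by
  have hμS_pos : 0 < μS q.1 := by
    rw [hμS]
    exact Finset.sum_pos (fun a _ ↦ hμ (q.1, a)) Finset.univ_nonempty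
  have hCS_nonneg : 0 ≤ CS :=
    nonneg_of_mul_nonneg_left ((hP s a q.1).trans (hCS s a q.1)) hμS_pos
  have hCA_pos : 0 < CA := pos_of_mul_pos_right hC hCS_nonneg
  have hmarginal : μS q.1 ≤ CA * μ q := by
    rw [← one_mul (μS q.1), mul_comm CA]
    exact (div_le_div_iff₀ hCA_pos hμS_pos).1 (hCA q.1 q.2)
  calc P s a q.1 ≤ CS * μS q.1 := hCS s a q.1
    _ ≤ CS * (CA * μ q) := mul_le_mul_of_nonneg_left hmarginal hCS_nonneg
    _ = CS * CA * μ q := (mul_assoc CS CA (μ q)).symm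

/-- The transition kernel of the MDP as a matrix from state-action pairs to states. -/
def transitionMatrix (P : S → A → S → ℝ) : Matrix (S × A) S ℝ :=
  of (Function.uncurry P)

variable [Fintype S]

theorem bellmanT_sub (P : S → A → S → ℝ) (R : S → A → ℝ) (γ : ℝ) (f g : S × A → ℝ) :
    bellmanT P R γ f - bellmanT P R γ g = γ • (transitionMatrix P *ᵥ (Vof f - Vof g)) := by
  have hT (h : S × A → ℝ) :
      bellmanT P R γ h = Function.uncurry R + γ • (transitionMatrix P *ᵥ Vof h) := rfl
  rw [hT, hT, mulVec_sub, smul_sub, add_sub_add_left_eq_sub]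

variable [DecidableEq X]

theorem projT_eq_cellAverage_mulVec (P : S → A → S → ℝ) (R : S → A → ℝ) (γ : ℝ) (μ : S × A → ℝ)
    (φ : S × A → X) (f : S × A → ℝ) :
    projT P R γ μ φ f = cellAverage μ φ *ᵥ bellmanT P R γ f := by
  ext q
  simp only [projT, cellAverage, mulVec, dotProduct, of_apply, div_mul_eq_mul_div, ite_mul,
    zero_mul, Finset.sum_div]

theorem projT_sub (P : S → A → S → ℝ) (R : S → A → ℝ) (γ : ℝ) (μ : S × A → ℝ)
    (φ : S × A → X) (f g : S × A → ℝ) :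
    projT P R γ μ φ f - projT P R γ μ φ g =
      γ • (cellAverage μ φ *ᵥ (transitionMatrix P *ᵥ (Vof f - Vof g))) := by
  rw [projT_eq_cellAverage_mulVec, projT_eq_cellAverage_mulVec, ← mulVec_sub, bellmanT_sub,
    mulVec_smul]

theorem exists_l2Norm_cellAverage_mulVec_le (hμ : ∀ q, 0 < μ q)
    (hP : ∀ s a, P s a ∈ stdSimplex ℝ S) (hC : ∀ s a q, P s a q.1 ≤ C * μ q)
    (hν : ν ∈ stdSimplex ℝ (S × A)) (φ : S × A → X) (f g : S × A → ℝ) :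
    ∃ ν' ∈ densityBounded C μ,
      l2Norm ν (cellAverage μ φ *ᵥ (transitionMatrix P *ᵥ (Vof f - Vof g))) ≤
        l2Norm ν' (f - g) := by
  classical
  choose π hπ using exists_abs_Vof_sub_le f g
  have hW := cellAverage_mem_stdSimplex hμ φ
  have hν₁ : ν ᵥ* cellAverage μ φ ∈ stdSimplex ℝ (S × A) :=
    vecMul_mem_of_convex (convex_stdSimplex ℝ _) hν hW
  set ν₁ := ν ᵥ* cellAverage μ φ
  have hm : ν₁ ᵥ* transitionMatrix P ∈ stdSimplex ℝ S :=
    vecMul_mem_of_convex (convex_stdSimplex ℝ _) hν₁ fun q ↦ hP q.1 q.2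
  have hmC (q : S × A) : (ν₁ ᵥ* transitionMatrix P) q.1 ≤ C * μ q :=
    vecMul_mem_of_convex (convex_Iic fun s ↦ C * μ (s, q.2)) hν₁
      (fun p s ↦ hC p.1 p.2 (s, q.2)) q.1
  set m := ν₁ ᵥ* transitionMatrix P
  refine ⟨policyLift m π, ⟨policyLift_mem_stdSimplex hm π, policyLift_le hm.1 hmC π⟩, ?_⟩
  refine Real.sqrt_le_sqrt ?_
  calc ν ⬝ᵥ (cellAverage μ φ *ᵥ (transitionMatrix P *ᵥ (Vof f - Vof g))) ^ 2
      ≤ ν₁ ⬝ᵥ (transitionMatrix P *ᵥ (Vof f - Vof g)) ^ 2 := dotProduct_mulVec_sq_le hν.1 hW _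
    _ ≤ m ⬝ᵥ (Vof f - Vof g) ^ 2 := dotProduct_mulVec_sq_le hν₁.1 (fun q ↦ hP q.1 q.2) _
    _ ≤ m ⬝ᵥ fun s ↦ ((f - g) ^ 2) (s, π s) :=
      dotProduct_le_dotProduct_of_nonneg_left (fun s ↦ sq_le_sq.2 (hπ s)) hm.1
    _ = policyLift m π ⬝ᵥ (f - g) ^ 2 := (policyLift_dotProduct m π _).symm

theorem worstL2Norm_projT_sub_le (hμ : ∀ q, 0 < μ q) (hγ : 0 ≤ γ)
    (hP : ∀ s a, P s a ∈ stdSimplex ℝ S) (hC : ∀ s a q, P s a q.1 ≤ C * μ q)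
    (f g : S × A → ℝ) :
    worstL2Norm C μ (projT P R γ μ φ f - projT P R γ μ φ g) ≤ γ * worstL2Norm C μ (f - g) := by
  refine worstL2Norm_le (mul_nonneg hγ (worstL2Norm_nonneg C μ _)) fun ν hν ↦ ?_
  obtain ⟨ν', hν', hle⟩ := exists_l2Norm_cellAverage_mulVec_le hμ hP hC hν.1 φ f g
  rw [projT_sub, l2Norm_smul ν hγ]
  exact mul_le_mul_of_nonneg_left (hle.trans (l2Norm_le_worstL2Norm hν' _)) hγ

theorem norm_sub_projT_le {Q g : S × A → ℝ} (hμ : ∀ q, 0 < μ q) (hQ : bellmanT P R γ Q = Q)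
    (hg : PiecewiseConst φ g) : ‖Q - projT P R γ μ φ Q‖ ≤ 2 * ‖g - Q‖ := by
  rw [projT_eq_cellAverage_mulVec, hQ]
  exact norm_sub_cellAverage_mulVec_le hμ hg Q

theorem stmt12_general (hP : ∀ s a, P s a ∈ stdSimplex ℝ S) (hγ0 : 0 ≤ γ) (hγ1 : γ < 1)
    (hμ : ∀ q, 0 < μ q) (hC : ∀ s a q, P s a q.1 ≤ C * μ q) {Qstar g : S × A → ℝ}
    (hQstar : bellmanT P R γ Qstar = Qstar) (hg : PiecewiseConst φ g) (f₀ : S × A → ℝ)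
    (hν : ν ∈ densityBounded C μ) :
    l2Norm ν (Qstar - f₀) ≤
      (2 * ‖g - Qstar‖ + √C * l2Norm μ (f₀ - projT P R γ μ φ f₀)) / (1 - γ) := by
  set T := projT P R γ μ φ
  have hstar : worstL2Norm C μ (Qstar - T Qstar) ≤ 2 * ‖g - Qstar‖ :=
    (worstL2Norm_le_norm C μ _).trans (norm_sub_projT_le hμ hQstar hg)
  have hcontract : worstL2Norm C μ (T Qstar - T f₀) ≤ γ * worstL2Norm C μ (Qstar - f₀) :=
    worstL2Norm_projT_sub_le hμ hγ0 hP hC Qstar f₀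
  have hresidual : worstL2Norm C μ (T f₀ - f₀) ≤ √C * l2Norm μ (f₀ - T f₀) := by
    rw [l2Norm_sub_comm]
    exact worstL2Norm_le_sqrt_mul_l2Norm C (fun q ↦ (hμ q).le) _
  have htriangle : worstL2Norm C μ (Qstar - f₀) ≤ worstL2Norm C μ (Qstar - T Qstar) +
      (worstL2Norm C μ (T Qstar - T f₀) + worstL2Norm C μ (T f₀ - f₀)) := by
    have h₁ := worstL2Norm_add_le C μ (Qstar - T Qstar) (T Qstar - f₀)
    have h₂ := worstL2Norm_add_le C μ (T Qstar - T f₀) (T f₀ - f₀)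
    rw [sub_add_sub_cancel] at h₁ h₂
    linarith
  refine (l2Norm_le_worstL2Norm hν _).trans ((le_div_iff₀ (sub_pos.2 hγ1)).2 ?_)
  linarith

end Bellman

/-- (Error propagation.)  Under the concentrability assumption with
constants `C_S`, `C_A` and `C := C_S C_A`, for any aggregation `φ` with
`ε_φ := min_{g ∈ G_φ} ‖g − Q⋆‖_∞` and any `f₀ : S × A → [0, V_max]`, every
distribution `ν` with `ν ≤ C μ` pointwise satisfies
`‖Q⋆ − f₀‖_{2,ν} ≤ (2 ε_φ + √C ‖f₀ − T_φ^μ f₀‖_{2,μ}) / (1 − γ)`. -/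
theorem stmt12 {S A X : Type*} [Fintype S] [Fintype A] [Nonempty S] [Nonempty A]
    [DecidableEq X]
    (P : S → A → S → ℝ) (R : S → A → ℝ) (Rmax γ Vmax : ℝ) (d0 : S → ℝ)
    (hP0 : ∀ s a s', 0 ≤ P s a s') (hP1 : ∀ s a, ∑ s', P s a s' = 1)
    (hR : ∀ s a, 0 ≤ R s a ∧ R s a ≤ Rmax)
    (hγ0 : 0 ≤ γ) (hγ1 : γ < 1)
    (hVmax : Vmax = Rmax / (1 - γ))
    (hd00 : ∀ s, 0 ≤ d0 s) (hd01 : ∑ s, d0 s = 1)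
    (μ : S × A → ℝ) (hμpos : ∀ q, 0 < μ q) (hμsum : ∑ q, μ q = 1)
    (μS : S → ℝ) (hμS : ∀ s, μS s = ∑ a, μ (s, a))
    -- concentrability assumption with constants C_S and C_A
    (CS CA : ℝ)
    (hconc_d0 : ∀ s, d0 s ≤ CS * μS s)
    (hconc_P : ∀ s a s', P s a s' ≤ CS * μS s')
    (hconc_A : ∀ s a, 1 / CA ≤ μ (s, a) / μS s)
    (φ : S × A → X)
    (Qstar : S × A → ℝ) (hQstar : bellmanT P R γ Qstar = Qstar)
    (εφ : ℝ)
    (hεφ : IsLeast {e : ℝ | ∃ g : S × A → ℝ, PiecewiseConst φ g ∧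
              supNorm (fun q => g q - Qstar q) = e} εφ)
    (f₀ : S × A → ℝ) (hf₀ : ∀ q, 0 ≤ f₀ q ∧ f₀ q ≤ Vmax) :
    ∀ ν : S × A → ℝ, (∀ q, 0 ≤ ν q) → (∑ q, ν q = 1) →
      (∀ q, ν q ≤ (CS * CA) * μ q) →
      l2Norm ν (fun q => Qstar q - f₀ q) ≤
        (2 * εφ + Real.sqrt (CS * CA) *
            l2Norm μ (fun q => f₀ q - projT P R γ μ φ f₀ q)) / (1 - γ) := by
  intro ν hν0 hν1 hνC
  obtain ⟨⟨g, hg, rfl⟩, -⟩ := hεφ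
  have hν : ν ∈ densityBounded (CS * CA) μ := ⟨⟨hν0, hν1⟩, hνC⟩
  have hC := pos_of_mem_densityBounded (fun q ↦ (hμpos q).le) hν
  rw [supNorm_eq_norm]
  exact stmt12_general (fun s a ↦ ⟨hP0 s a, hP1 s a⟩) hγ0 hγ1 hμpos
    (transition_le_of_concentrability hμpos hμS hP0 hconc_P hconc_A hC) hQstar hg f₀ hν
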